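/- Let H be a real inner product space, B : H → H → ℝ a symmetric bilinear form, W a finite-dimensional subspace of H with dim W = k such that B(u,u) ≥ 0 for every u ∈ H orthogonal to W, and K a linear subspace of H such that every u orthogonal to W with B(u,u) = 0 belongs to K. Fix a positive integer N, let D be a linear subspace of the product H^N, and let Z be a finite-dimensional subspace of D with dim Z = z such that every V ∈ D all of whose components V_i lie in K belongs to Z. Define Q(V) = Σ_{i=1}^{N} B(V_i, V_i). Then every finite-dimensional subspace T of D with Q(V) ≤ 0 for all V ∈ T satisfies dim T ≤ N·k + z. -/

import Mathlib

/-!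
Let `U` be a subspace of `H` on which `q` is nonnegative. If all components of `V` lie in `U` and
`∑ i, q (V i) ≤ 0`, then every summand vanishes. Hence `T` meets the kernel of the componentwise
quotient map `(ι → H) → (ι → H ⧸ U)` inside `Z`, and rank–nullity for the restriction of this map to
`T` bounds the dimension of `T`. For `U = Wᗮ` the quotient `H ⧸ U` is isomorphic to `W`.
-/

universe u v

open Module Submodule

theorem rank_le_rank_add_rank_of_inf_ker_le {R : Type*} {M N : Type u} [Ring R]
    [HasRankNullity.{u} R] [AddCommGroup M] [Module R M] [AddCommGroup N] [Module R N]
    (f : M →ₗ[R] N) {S P : Submodule R M} (h : S ⊓ LinearMap.ker f ≤ P) :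
    Module.rank R S ≤ Module.rank R N + Module.rank R P := by
  have hker : Module.rank R (LinearMap.ker (f.domRestrict S)) ≤ Module.rank R P := by
    rw [LinearMap.ker_domRestrict, (equivSubtypeMap S _).rank_eq, map_comap_subtype]
    exact rank_mono h
  calc Module.rank R S
      = Module.rank R (LinearMap.range (f.domRestrict S))
          + Module.rank R (LinearMap.ker (f.domRestrict S)) :=
        (LinearMap.rank_range_add_rank_ker _).symm
    _ ≤ Module.rank R N + Module.rank R P := add_le_add (rank_le _) hker

theorem rank_le_card_mul_rank_quotient_add_rank {𝕜 : Type*} {ι : Type v} {H : Type u}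
    [DivisionRing 𝕜] [Fintype ι] [AddCommGroup H] [Module 𝕜 H] (U : Submodule 𝕜 H)
    {T Z : Submodule 𝕜 (ι → H)} (h : ∀ V ∈ T, (∀ i, V i ∈ U) → V ∈ Z) :
    Module.rank 𝕜 T ≤
      Fintype.card ι * Cardinal.lift.{v} (Module.rank 𝕜 (H ⧸ U)) + Module.rank 𝕜 Z := by
  rw [← rank_fun_eq_lift_mul]
  refine rank_le_rank_add_rank_of_inf_ker_le (U.mkQ.compLeft ι) fun V hV ↦ h V hV.1 ?_
  simpa [LinearMap.ker_compLeft] using hV.2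

theorem mem_of_sum_nonpos {ι H Γ : Type*} [Fintype ι] [AddCommMonoid Γ] [PartialOrder Γ]
    [IsOrderedAddMonoid Γ] {q : H → Γ} {U K : Set H} (hpos : ∀ u ∈ U, 0 ≤ q u)
    (hK : ∀ u ∈ U, q u = 0 → u ∈ K) {V : ι → H} (hVU : ∀ i, V i ∈ U)
    (hV : ∑ i, q (V i) ≤ 0) (i : ι) : V i ∈ K := by
  have hnonneg : 0 ≤ fun i ↦ q (V i) := fun i ↦ hpos _ (hVU i)
  have hsum : ∑ i, q (V i) = 0 := hV.antisymm (Fintype.sum_nonneg hnonneg)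
  exact hK _ (hVU i) (congrFun ((Fintype.sum_eq_zero_iff_of_nonneg hnonneg).1 hsum) i)

theorem rank_quotient_orthogonal {𝕜 E : Type*} [RCLike 𝕜] [NormedAddCommGroup E]
    [InnerProductSpace 𝕜 E] (W : Submodule 𝕜 E) [W.HasOrthogonalProjection] :
    Module.rank 𝕜 (E ⧸ Wᗮ) = Module.rank 𝕜 W :=
  (quotientEquivOfIsCompl _ _ W.isCompl_orthogonal.symm).rank_eq

theorem stmt_2_general {𝕜 Γ : Type*} {ι : Type v} {H : Type u} [DivisionRing 𝕜]
    [Fintype ι] [AddCommGroup H] [Module 𝕜 H] [AddCommMonoid Γ] [PartialOrder Γ]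
    [IsOrderedAddMonoid Γ] {q : H → Γ} {U : Submodule 𝕜 H} {K : Set H}
    (hpos : ∀ u ∈ U, 0 ≤ q u) (hK : ∀ u ∈ U, q u = 0 → u ∈ K)
    {D Z T : Submodule 𝕜 (ι → H)} (hZ : ∀ V ∈ D, (∀ i, V i ∈ K) → V ∈ Z)
    (hTD : T ≤ D) (hT : ∀ V ∈ T, ∑ i, q (V i) ≤ 0) :
    Module.rank 𝕜 T ≤
      Fintype.card ι * Cardinal.lift.{v} (Module.rank 𝕜 (H ⧸ U)) + Module.rank 𝕜 Z :=
  rank_le_card_mul_rank_quotient_add_rank U fun V hV hVU ↦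
    hZ V (hTD hV) (mem_of_sum_nonpos hpos hK hVU (hT V hV))

/-- Linear-algebraic content of Theorem 3.3 of the paper. -/
theorem stmt_2 {H : Type*} [NormedAddCommGroup H] [InnerProductSpace ℝ H]
    (B : H →ₗ[ℝ] H →ₗ[ℝ] ℝ) (hBsymm : ∀ u v : H, B u v = B v u)
    (W : Submodule ℝ H) [FiniteDimensional ℝ W] (k : ℕ)
    (hk : Module.finrank ℝ W = k)
    (hpos : ∀ u : H, (∀ w ∈ W, (inner ℝ u w : ℝ) = 0) → 0 ≤ B u u)
    (K : Submodule ℝ H)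
    (hK : ∀ u : H, (∀ w ∈ W, (inner ℝ u w : ℝ) = 0) → B u u = 0 → u ∈ K)
    (N : ℕ) (hN : 0 < N)
    (D : Submodule ℝ (Fin N → H))
    (Z : Submodule ℝ (Fin N → H)) [FiniteDimensional ℝ Z] (z : ℕ)
    (hz : Module.finrank ℝ Z = z) (hZD : Z ≤ D)
    (hZ : ∀ V ∈ D, (∀ i : Fin N, V i ∈ K) → V ∈ Z)
    (T : Submodule ℝ (Fin N → H)) [FiniteDimensional ℝ T] (hTD : T ≤ D)
    (hT : ∀ V ∈ T, (∑ i : Fin N, B (V i) (V i)) ≤ 0) :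
    Module.finrank ℝ T ≤ N * k + z := by
  have hrank := stmt_2_general (q := fun u ↦ B u u) (U := Wᗮ)
    (fun u hu ↦ hpos u ((W.mem_orthogonal' u).1 hu))
    (fun u hu ↦ hK u ((W.mem_orthogonal' u).1 hu)) hZ hTD hT
  exact Module.finrank_le_of_rank_le <| by
    simpa [rank_quotient_orthogonal, ← Module.finrank_eq_rank, hk, hz] using hrank
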